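/- For any X ⊆ ω, if there exists an embedding of pcas of λη into K1^X, or of λ into K1^X, then the halting set K is Turing reducible to X. In particular, neither λ nor λη embeds into Kleene's first model K1 = K1^∅. -/

import Mathlib

namespace PCAEmb

/-! ### Oracle computability -/

/-- Codes for partial functions computable relative to an oracle. -/
inductive OCode : Type
  | zero : OCode
  | succ : OCode
  | left : OCode
  | right : OCode
  | oracle : OCode
  | pair : OCode → OCode → OCode
  | comp : OCode → OCode → OCode
  | prec : OCode → OCode → OCode
  | rfind' : OCode → OCode

/-- Evaluation of an oracle code, relative to a (partial) oracle `O`. -/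
def evalo (O : ℕ →. ℕ) : OCode → ℕ →. ℕ
  | .zero => pure 0
  | .succ => Nat.succ
  | .left => ↑fun n : ℕ => n.unpair.1
  | .right => ↑fun n : ℕ => n.unpair.2
  | .oracle => O
  | .pair cf cg => fun n => Nat.pair <$> evalo O cf n <*> evalo O cg n
  | .comp cf cg => fun n => evalo O cg n >>= evalo O cf
  | .prec cf cg =>
      Nat.unpaired fun a n =>
        n.rec (evalo O cf a) fun y IH => do
          let i ← IH
          evalo O cg (Nat.pair a (Nat.pair y i))
  | .rfind' cf =>
      Nat.unpaired fun a m =>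
        (Nat.rfind fun n => (fun x => x = 0) <$> evalo O cf (Nat.pair a (n + m))).map (· + m)

/-- The standard numbering of oracle codes. -/
def OCode.ofNat : ℕ → OCode
  | 0 => .zero
  | 1 => .succ
  | 2 => .left
  | 3 => .right
  | 4 => .oracle
  | n + 5 =>
    match n % 4 with
    | 0 => .pair (OCode.ofNat (n / 4).unpair.1) (OCode.ofNat (n / 4).unpair.2)
    | 1 => .comp (OCode.ofNat (n / 4).unpair.1) (OCode.ofNat (n / 4).unpair.2)
    | 2 => .prec (OCode.ofNat (n / 4).unpair.1) (OCode.ofNat (n / 4).unpair.2)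
    | _ => .rfind' (OCode.ofNat (n / 4).unpair.1)
  decreasing_by
    all_goals
      have h1 := Nat.unpair_left_le (n / 4)
      have h2 := Nat.unpair_right_le (n / 4)
      have h3 := Nat.div_le_self n 4
      omega

/-- The `e`-th Turing functional with oracle `O` : `Φ_e^O`. -/
def phi (O : ℕ →. ℕ) (e : ℕ) : ℕ →. ℕ := evalo O (OCode.ofNat e)

/-- The characteristic function of a set of naturals, as a (total) partial function. -/
noncomputable def chi (X : Set ℕ) : ℕ →. ℕ :=
  fun n => Part.some (X.indicator (fun _ => 1) n)

/-- `ψ` is partial computable relative to the oracle `O`. -/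
def RecursiveIn (O : ℕ →. ℕ) (ψ : ℕ →. ℕ) : Prop := ∃ c : OCode, evalo O c = ψ

/-- Turing reducibility of sets of naturals. -/
def TuringLE (X Y : Set ℕ) : Prop := RecursiveIn (chi Y) (chi X)

/-- A total function `d : ℕ → ℕ` is `Y`-computable. -/
def ComputableIn (Y : Set ℕ) (d : ℕ → ℕ) : Prop :=
  RecursiveIn (chi Y) (fun n => Part.some (d n))

/-- A binary relation on `ℕ` is `Y`-c.e. -/
def CEIn (Y : Set ℕ) (R : ℕ → ℕ → Prop) : Prop :=
  ∃ c : OCode, ∀ n m, R n m ↔ (evalo (chi Y) c (Nat.pair n m)).Dom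

/-- A set `W ⊆ ℕ` is `Y`-c.e. -/
def CE1In (Y : Set ℕ) (W : Set ℕ) : Prop :=
  ∃ c : OCode, ∀ n, n ∈ W ↔ (evalo (chi Y) c n).Dom

/-- The canonical finite set `D_u` with code `u` (binary coding). -/
def Du (u : ℕ) : Set ℕ := {k | u.testBit k}

/-- Enumeration reducibility: `Z ≤ₑ Y`. -/
def EnumLE (Z Y : Set ℕ) : Prop :=
  ∃ W : Set ℕ, CE1In ∅ W ∧ ∀ x, x ∈ Z ↔ ∃ u, Nat.pair x u ∈ W ∧ Du u ⊆ Y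

/-- The Turing jump `X'` of a set `X`. -/
def jump (X : Set ℕ) : Set ℕ := {e | (phi (chi X) e e).Dom}

/-- The halting set `K = {e : φ_e(e)↓}`. -/
def Khalt : Set ℕ := jump ∅

/-! ### Partial combinatory algebras -/

/-- `k·a·b` as a partial element. -/
def app2 {α : Type*} (app : α → α → Part α) (a b c : α) : Part α :=
  (app a b).bind fun x => app x c

/-- `s·a·b·c` as a partial element. -/
def app3 {α : Type*} (app : α → α → Part α) (a b c d : α) : Part α :=
  (app2 app a b c).bind fun x => app x d

/-- A partial applicative structure is a pca if it has (distinct) combinators `s` and `k`. -/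
def IsPCA {α : Type*} (app : α → α → Part α) : Prop :=
  ∃ s k : α, s ≠ k ∧
    (∀ a b : α, app2 app k a b = Part.some a) ∧
    (∀ a b : α, (app2 app s a b).Dom) ∧
    (∀ a b c : α,
      app3 app s a b c = (app a c).bind fun x => (app b c).bind fun y => app x y)

/-- An embedding of partial combinatory algebras: an injection that preserves
(defined) application. -/
def IsPCAEmbedding {α β : Type*} (appA : α → α → Part α) (appB : β → β → Part β)
    (f : α → β) : Prop :=
  Function.Injective f ∧ ∀ a a' c : α, c ∈ appA a a' → f c ∈ appB (f a) (f a')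

/-! ### Partial numberings -/

/-- `γ : ℕ ⇀ α` is a partial numbering (i.e. surjective). -/
def IsNumbering {α : Type*} (γ : ℕ →. α) : Prop := ∀ a : α, ∃ n, a ∈ γ n

/-- `d` is an `(a⊥, a⊤)`-decider for `X` with respect to `γ`. -/
def IsDecider {α : Type*} (γ : ℕ →. α) (abot atop : α) (X : Set ℕ) (d : ℕ → ℕ) : Prop :=
  ∀ n, (n ∉ X → γ (d n) = Part.some abot) ∧ (n ∈ X → γ (d n) = Part.some atop)

/-- `γ` has `Y`-c.e. inequivalence. -/
def CEInequiv {α : Type*} (Y : Set ℕ) (γ : ℕ →. α) : Prop :=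
  ∃ R : ℕ → ℕ → Prop, CEIn Y R ∧
    ∀ n m, (γ n).Dom → (γ m).Dom → (R n m ↔ γ n ≠ γ m)

/-- `γ` is a `Y`-effectively pca-valued partial numbering: the application is
represented on codes by a partial `Y`-computable function `ψ`. -/
def EffValued {α : Type*} (Y : Set ℕ) (app : α → α → Part α) (γ : ℕ →. α) : Prop :=
  ∃ ψ : ℕ →. ℕ, RecursiveIn (chi Y) ψ ∧
    ∀ (n m : ℕ) (a b c : α), a ∈ γ n → b ∈ γ m → c ∈ app a b →
      ∃ j, j ∈ ψ (Nat.pair n m) ∧ c ∈ γ j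

/-- `γ` is a strongly `Y`-effectively pca-valued partial numbering. -/
def StrongEffValued {α : Type*} (Y : Set ℕ) (app : α → α → Part α) (γ : ℕ →. α) : Prop :=
  ∃ ψ : ℕ →. ℕ, RecursiveIn (chi Y) ψ ∧
    (∀ (n m : ℕ) (a b c : α), a ∈ γ n → b ∈ γ m → c ∈ app a b →
      ∃ j, j ∈ ψ (Nat.pair n m) ∧ c ∈ γ j) ∧
    (∀ (n m k l : ℕ) (a b a' b' c : α), a ∈ γ n → b ∈ γ m → a' ∈ γ k → b' ∈ γ l →
      c ∈ app a b → c ∈ app a' b' → ψ (Nat.pair n m) = ψ (Nat.pair k l))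

/-! ### The models -/

/-- Kleene's first model relativized to `X`: application `n · m = Φ_n^X(m)`. -/
noncomputable def k1App (X : Set ℕ) : ℕ → ℕ → Part ℕ := fun n m => phi (chi X) n m

/-- A total function as a partial function. -/
def toPFun (g : ℕ → ℕ) : ℕ →. ℕ := fun n => Part.some (g n)

/-- Join `f ⊕ g` of two partial functions. -/
def pjoin (f g : ℕ →. ℕ) : ℕ →. ℕ := fun n =>
  if n % 2 = 0 then f (n / 2) else g (n / 2)

/-- The totalization of a partial function, as a partial element of `ℕ → ℕ`:
defined iff `ψ` is total. -/
def partToTotal (ψ : ℕ →. ℕ) : Part (ℕ → ℕ) :=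
  ⟨∀ n, (ψ n).Dom, fun H n => (ψ n).get (H n)⟩

/-- Application in Kleene's second model `K₂`: `g · h = Φ^{g⊕h}_{g 0}`,
defined iff this function is total. -/
def k2App (g h : ℕ → ℕ) : Part (ℕ → ℕ) :=
  partToTotal (phi (pjoin (toPFun g) (toPFun h)) (g 0))

/-- Application in van Oosten's sequential model `B`: `θ · ρ = Φ^{θ⊕ρ}_{θ 0}`
(always defined, as a partial function). -/
def bApp (θ ρ : ℕ →. ℕ) : Part (ℕ →. ℕ) :=
  Part.some (fun n => (θ 0).bind fun e => phi (pjoin θ ρ) e n)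

/-- Restriction of a partial applicative structure to a subset. -/
def subApp {α : Type*} (app : α → α → Part α) (P : α → Prop)
    (a b : Subtype P) : Part (Subtype P) :=
  (app a.1 b.1).bind fun c => Part.assert (P c) fun h => Part.some ⟨c, h⟩

/-- Carrier of `K₂^X` : the total `X`-computable functions. -/
def K2el (X : Set ℕ) : Type := {g : ℕ → ℕ // RecursiveIn (chi X) (toPFun g)}

/-- Application in `K₂^X`. -/
def k2XApp (X : Set ℕ) : K2el X → K2el X → Part (K2el X) :=
  subApp k2App _

/-- Carrier of `B^X` : the partial `X`-computable functions. -/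
def Bel (X : Set ℕ) : Type := {θ : ℕ →. ℕ // RecursiveIn (chi X) θ}

/-- Application in `B^X`. -/
def bXApp (X : Set ℕ) : Bel X → Bel X → Part (Bel X) :=
  subApp bApp _

/-- Application in Scott's graph model `G`. -/
def gApp (A B : Set ℕ) : Part (Set ℕ) :=
  Part.some {n | ∃ u, Nat.pair n u ∈ A ∧ Du u ⊆ B}

/-- Carrier of `G^Z` : the sets enumeration-reducible to `Z`. -/
def Gel (Z : Set ℕ) : Type := {A : Set ℕ // EnumLE A Z}

/-- Application in `G^Z`. -/
def gXApp (Z : Set ℕ) : Gel Z → Gel Z → Part (Gel Z) :=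
  subApp gApp _

/-- `X ⊕ X̄ = {2n : n ∈ X} ∪ {2n+1 : n ∉ X}`. -/
def joinCompl (X : Set ℕ) : Set ℕ :=
  {k | ∃ n, (k = 2 * n ∧ n ∈ X) ∨ (k = 2 * n + 1 ∧ n ∉ X)}

/-! ### The λ-calculus -/

/-- Untyped λ-terms (de Bruijn representation). -/
inductive Lam : Type
  | var : ℕ → Lam
  | app : Lam → Lam → Lam
  | abs : Lam → Lam

/-- Lift (shift up) the free variables `≥ d` of a term. -/
def Lam.lift : Lam → ℕ → Lam
  | .var n, d => if n < d then .var n else .var (n + 1)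
  | .app M N, d => .app (M.lift d) (N.lift d)
  | .abs M, d => .abs (M.lift (d + 1))

/-- Substitution `M[k := N]` (de Bruijn). -/
def Lam.subst : Lam → ℕ → Lam → Lam
  | .var n, k, N => if n = k then N else if k < n then .var (n - 1) else .var n
  | .app M M', k, N => .app (M.subst k N) (M'.subst k N)
  | .abs M, k, N => .abs (M.subst (k + 1) (N.lift 0))

/-- β-equivalence of λ-terms. -/
inductive BetaEq : Lam → Lam → Prop
  | beta (M N : Lam) : BetaEq (.app (.abs M) N) (M.subst 0 N)
  | refl (M : Lam) : BetaEq M M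
  | symm {M N : Lam} : BetaEq M N → BetaEq N M
  | trans {M N P : Lam} : BetaEq M N → BetaEq N P → BetaEq M P
  | appCongr {M M' N N' : Lam} :
      BetaEq M M' → BetaEq N N' → BetaEq (.app M N) (.app M' N')
  | absCongr {M M' : Lam} : BetaEq M M' → BetaEq (.abs M) (.abs M')

/-- βη-equivalence of λ-terms. -/
inductive BetaEtaEq : Lam → Lam → Prop
  | beta (M N : Lam) : BetaEtaEq (.app (.abs M) N) (M.subst 0 N)
  | eta (M : Lam) : BetaEtaEq (.abs (.app (M.lift 0) (.var 0))) M
  | refl (M : Lam) : BetaEtaEq M M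
  | symm {M N : Lam} : BetaEtaEq M N → BetaEtaEq N M
  | trans {M N P : Lam} : BetaEtaEq M N → BetaEtaEq N P → BetaEtaEq M P
  | appCongr {M M' N N' : Lam} :
      BetaEtaEq M M' → BetaEtaEq N N' → BetaEtaEq (.app M N) (.app M' N')
  | absCongr {M M' : Lam} : BetaEtaEq M M' → BetaEtaEq (.abs M) (.abs M')

def lamBetaSetoid : Setoid Lam := ⟨BetaEq, ⟨BetaEq.refl, BetaEq.symm, BetaEq.trans⟩⟩

def lamBetaEtaSetoid : Setoid Lam :=
  ⟨BetaEtaEq, ⟨BetaEtaEq.refl, BetaEtaEq.symm, BetaEtaEq.trans⟩⟩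

/-- The pca `λ` of λ-terms modulo β-equivalence. -/
def LamBeta : Type := Quotient lamBetaSetoid

/-- The pca `λη` of λ-terms modulo βη-equivalence. -/
def LamBetaEta : Type := Quotient lamBetaEtaSetoid

/-- Application in `λ` (total). -/
def lamBetaApp : LamBeta → LamBeta → Part LamBeta := fun a b =>
  Part.some (Quotient.map₂ Lam.app (fun _ _ h1 _ _ h2 => BetaEq.appCongr h1 h2) a b)

/-- Application in `λη` (total). -/
def lamBetaEtaApp : LamBetaEta → LamBetaEta → Part LamBetaEta := fun a b =>
  Part.some (Quotient.map₂ Lam.app (fun _ _ h1 _ _ h2 => BetaEtaEq.appCongr h1 h2) a b)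


/-! ### A resource-sensitive extensional relational model -/

abbrev Ctx := ℕ → Multiset ℕ

/-- A bijection `ℕ ≃ Multiset ℕ × ℕ`. -/
noncomputable def arrE : Multiset ℕ × ℕ ≃ ℕ := Denumerable.eqv (Multiset ℕ × ℕ)

noncomputable def arr (a : Multiset ℕ) (b : ℕ) : ℕ := arrE (a, b)

theorem arr_inj {a b : Multiset ℕ} {x y : ℕ} : arr a x = arr b y ↔ a = b ∧ x = y := by
  simp [arr]

theorem arr_surj (c : ℕ) : ∃ a x, c = arr a x :=
  ⟨(arrE.symm c).1, (arrE.symm c).2, by simp [arr]⟩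

def del (k : ℕ) (Γ : Ctx) : Ctx := fun n => if n < k then Γ n else Γ (n + 1)

def up (Γ : Ctx) : Ctx := fun n => if n = 0 then 0 else Γ (n - 1)

theorem del_add (k : ℕ) (Γ Δ : Ctx) : del k (Γ + Δ) = del k Γ + del k Δ := by
  funext n; simp only [del, Pi.add_apply]; split_ifs <;> rfl

theorem del_zero (k : ℕ) : del k 0 = 0 := by
  funext n; simp [del]

theorem del_del (k : ℕ) (Γ : Ctx) : del k (del 0 Γ) = del 0 (del (k + 1) Γ) := by
  funext n; simp [del]

theorem del0_apply (k : ℕ) (Γ : Ctx) : del 0 Γ k = Γ (k + 1) := by simp [del]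

theorem delS_zero (k : ℕ) (Γ : Ctx) : del (k + 1) Γ 0 = Γ 0 := by simp [del]

theorem del_up (Γ : Ctx) : del 0 (up Γ) = Γ := by funext n; simp [del, up]

theorem up_zero (Γ : Ctx) : up Γ 0 = 0 := by simp [up]

theorem ctx_ext0 {Γ Δ : Ctx} (h0 : Γ 0 = Δ 0) (h : del 0 Γ = del 0 Δ) : Γ = Δ := by
  funext n
  cases n with
  | zero => exact h0
  | succ n => simpa [del] using congrFun h n

inductive Multi (P : Ctx → ℕ → ℕ → Prop) : Ctx → Multiset ℕ → ℕ → Prop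
  | nil : Multi P 0 0 0
  | cons {Γ Δ : Ctx} {x : ℕ} {a : Multiset ℕ} {s t : ℕ} :
      P Γ x s → Multi P Δ a t → Multi P (Γ + Δ) (x ::ₘ a) (s + t)

theorem Multi.nil_inv {P : Ctx → ℕ → ℕ → Prop} {Γ : Ctx} {s : ℕ} (h : Multi P Γ 0 s) :
    Γ = 0 ∧ s = 0 := by
  generalize ha : (0 : Multiset ℕ) = a at h
  cases h with
  | nil => exact ⟨rfl, rfl⟩
  | cons _ _ => exact absurd ha.symm (Multiset.cons_ne_zero)

theorem Multi.cons_inv {P : Ctx → ℕ → ℕ → Prop} {Γ : Ctx} {x : ℕ} {a : Multiset ℕ} {s : ℕ}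
    (h : Multi P Γ (x ::ₘ a) s) :
    ∃ Γ1 Γ2 s1 s2, P Γ1 x s1 ∧ Multi P Γ2 a s2 ∧ Γ = Γ1 + Γ2 ∧ s = s1 + s2 := by
  generalize hb : x ::ₘ a = b at h
  induction h generalizing a with
  | nil => exact absurd hb (Multiset.cons_ne_zero)
  | @cons Γ Δ y c s t hy hc ih =>
    rcases Multiset.cons_eq_cons.1 hb with ⟨rfl, rfl⟩ | ⟨_, d, rfl, rfl⟩
    · exact ⟨_, _, _, _, hy, hc, rfl, rfl⟩
    · obtain ⟨Γ1, Γ2, s1, s2, h1, h2, rfl, rfl⟩ := ih rfl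
      exact ⟨Γ1, Γ + Γ2, s1, s + s2, h1, .cons hy h2, by abel, by omega⟩

theorem Multi.add {P : Ctx → ℕ → ℕ → Prop} {Γ Δ : Ctx} {a b : Multiset ℕ} {s t : ℕ}
    (h : Multi P Γ a s) (h' : Multi P Δ b t) : Multi P (Γ + Δ) (a + b) (s + t) := by
  induction h with
  | nil => simpa using h'
  | cons hx _ ih =>
    have := Multi.cons hx ih
    simpa [add_assoc] using this

theorem Multi.add_inv {P : Ctx → ℕ → ℕ → Prop} {Γ : Ctx} {a b : Multiset ℕ} {s : ℕ}
    (h : Multi P Γ (a + b) s) :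
    ∃ Γ1 Γ2 s1 s2, Multi P Γ1 a s1 ∧ Multi P Γ2 b s2 ∧ Γ = Γ1 + Γ2 ∧ s = s1 + s2 := by
  induction a using Multiset.induction_on generalizing Γ s with
  | empty => exact ⟨0, Γ, 0, s, .nil, by simpa using h, by simp, by simp⟩
  | cons x a ih =>
    rw [Multiset.cons_add] at h
    obtain ⟨Γ1, Γ2, s1, s2, h1, h2, rfl, rfl⟩ := h.cons_inv
    obtain ⟨Γ3, Γ4, s3, s4, h3, h4, rfl, rfl⟩ := ih h2
    exact ⟨_, _, _, _, .cons h1 h3, h4, by abel, by omega⟩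

theorem Multi.single {P : Ctx → ℕ → ℕ → Prop} {Γ : Ctx} {x s : ℕ} :
    Multi P Γ {x} s ↔ P Γ x s := by
  constructor
  · intro h
    obtain ⟨Γ1, Γ2, s1, s2, h1, h2, rfl, rfl⟩ := Multi.cons_inv (a := 0) h
    obtain ⟨rfl, rfl⟩ := h2.nil_inv
    simpa using h1
  · intro h
    simpa using Multi.cons h Multi.nil

/-- The interpretation: `I M Γ x s` says that `M` has the type `x` in `Γ` with a derivation of
size `s`. -/
def I : Lam → Ctx → ℕ → ℕ → Prop
  | .var n, Γ, x, s => Γ = Pi.single n {x} ∧ s = 0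
  | .app M N, Γ, x, s => ∃ Γ1 Γ2 a s1 s2,
      I M Γ1 (arr a x) s1 ∧ Multi (I N) Γ2 a s2 ∧ Γ = Γ1 + Γ2 ∧ s = s1 + s2 + 1
  | .abs M, Γ, y, s => ∃ Γ1 x s1,
      I M Γ1 x s1 ∧ y = arr (Γ1 0) x ∧ Γ = del 0 Γ1 ∧ s = s1 + 1

theorem del_single_lt {n k x : ℕ} (h : n < k) :
    del k (Pi.single n ({x} : Multiset ℕ)) = Pi.single n {x} := by
  funext m; simp only [del, Pi.single_apply]; split_ifs <;> first | rfl | omega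

theorem del_single_gt {n k x : ℕ} (h : k < n) :
    del k (Pi.single n ({x} : Multiset ℕ)) = Pi.single (n - 1) {x} := by
  funext m; simp only [del, Pi.single_apply]; split_ifs <;> first | rfl | omega

theorem del_single_eq {k x : ℕ} :
    del k (Pi.single k ({x} : Multiset ℕ)) = 0 := by
  funext m; simp only [del, Pi.single_apply]; split_ifs <;> first | rfl | omega

def ins (k : ℕ) (Γ : Ctx) : Ctx := fun n => if n < k then Γ n else if n = k then 0 else Γ (n - 1)

theorem ins_self (k : ℕ) (Γ : Ctx) : ins k Γ k = 0 := by simp [ins]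

theorem ins_add (k : ℕ) (Γ Δ : Ctx) : ins k (Γ + Δ) = ins k Γ + ins k Δ := by
  funext n; simp only [ins, Pi.add_apply]; split_ifs <;> simp

theorem ins_zero (k : ℕ) : ins k 0 = 0 := by
  funext n; simp [ins]

theorem del_ins (k : ℕ) (Γ : Ctx) : del k (ins k Γ) = Γ := by
  funext n; simp only [del, ins]; split_ifs <;> first | rfl | omega

theorem ins_del {k : ℕ} {Γ : Ctx} (h : Γ k = 0) : ins k (del k Γ) = Γ := by
  funext n; simp only [del, ins]; split_ifs with h1 h2 h3
  · rfl
  · rw [h2, h]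
  · omega
  · rw [Nat.sub_add_cancel (by omega)]

theorem del0_ins (k : ℕ) (Γ : Ctx) : del 0 (ins (k + 1) Γ) = ins k (del 0 Γ) := by
  funext n; simp only [del, ins]
  split_ifs <;> first | rfl | omega | (congr 1; omega)

theorem Multi.ins {P Q : Ctx → ℕ → ℕ → Prop} {k : ℕ}
    (h : ∀ Γ x s, Q Γ x s ↔ ∃ Δ, Γ = ins k Δ ∧ P Δ x s) {Γ a s} :
    Multi Q Γ a s ↔ ∃ Δ, Γ = PCAEmb.ins k Δ ∧ Multi P Δ a s := by
  constructor
  · intro H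
    induction H with
    | nil => exact ⟨0, (ins_zero k).symm, .nil⟩
    | cons hx _ ih =>
      obtain ⟨Δ, rfl, h2⟩ := (h _ _ _).1 hx
      obtain ⟨Δ', rfl, h2'⟩ := ih
      exact ⟨Δ + Δ', by rw [ins_add], .cons h2 h2'⟩
  · rintro ⟨Δ, rfl, H⟩
    induction H with
    | nil => rw [ins_zero]; exact .nil
    | cons hx _ ih => rw [ins_add]; exact .cons ((h _ _ _).2 ⟨_, rfl, hx⟩) ih

theorem I_lift (M : Lam) : ∀ (k : ℕ) (Γ : Ctx) (x s : ℕ),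
    I (M.lift k) Γ x s ↔ ∃ Δ, Γ = ins k Δ ∧ I M Δ x s := by
  induction M with
  | var n =>
    intro k Γ x s
    simp only [Lam.lift]
    split_ifs with h
    · simp only [I]
      have : ins k (Pi.single n {x}) = Pi.single n {x} := by
        funext m; simp only [ins, Pi.single_apply]; split_ifs <;> first | rfl | omega
      constructor
      · rintro ⟨rfl, rfl⟩; exact ⟨_, this.symm, rfl, rfl⟩
      · rintro ⟨_, rfl, rfl, rfl⟩; exact ⟨this, rfl⟩
    · simp only [I]
      have : ins k (Pi.single n {x}) = Pi.single (n + 1) {x} := by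
        funext m; simp only [ins, Pi.single_apply]; split_ifs <;> first | rfl | omega
      constructor
      · rintro ⟨rfl, rfl⟩; exact ⟨_, this.symm, rfl, rfl⟩
      · rintro ⟨_, rfl, rfl, rfl⟩; exact ⟨this, rfl⟩
  | app M N ihM ihN =>
    intro k Γ x s
    simp only [Lam.lift, I]
    constructor
    · rintro ⟨Γ1, Γ2, a, s1, s2, h1, h2, rfl, rfl⟩
      obtain ⟨Δ1, rfl, g1⟩ := (ihM _ _ _ _).1 h1
      obtain ⟨Δ2, rfl, g2⟩ := (Multi.ins (ihN k)).1 h2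
      exact ⟨_, (ins_add _ _ _).symm, _, _, _, _, _, g1, g2, rfl, rfl⟩
    · rintro ⟨_, rfl, Γ1, Γ2, a, s1, s2, h1, h2, rfl, rfl⟩
      exact ⟨_, _, _, _, _, (ihM _ _ _ _).2 ⟨_, rfl, h1⟩,
        (Multi.ins (ihN k)).2 ⟨_, rfl, h2⟩, ins_add _ _ _, rfl⟩
  | abs M ih =>
    intro k Γ x s
    simp only [Lam.lift, I]
    constructor
    · rintro ⟨Γ1, y, s1, h1, rfl, rfl, rfl⟩
      obtain ⟨Δ, rfl, g1⟩ := (ih _ _ _ _).1 h1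
      exact ⟨_, del0_ins _ _, _, _, _, g1, by simp [PCAEmb.ins], rfl, rfl⟩
    · rintro ⟨_, rfl, Γ1, y, s1, h1, rfl, rfl, rfl⟩
      exact ⟨_, _, _, (ih _ _ _ _).2 ⟨_, rfl, h1⟩, by simp [PCAEmb.ins], (del0_ins _ _).symm, rfl⟩

/-- Shape of the substitution lemma. -/
def Sub (P Q : Ctx → ℕ → ℕ → Prop) (k : ℕ) (Γ : Ctx) (x s : ℕ) : Prop :=
  ∃ Γ1 Γ2 s1 s2, P Γ1 x s1 ∧ Multi Q Γ2 (Γ1 k) s2 ∧ Γ = del k Γ1 + Γ2 ∧ s = s1 + s2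

theorem Multi.sub {P Q R : Ctx → ℕ → ℕ → Prop} {k : ℕ}
    (h : ∀ Γ x s, R Γ x s ↔ Sub P Q k Γ x s) {Γ a s} :
    Multi R Γ a s ↔ ∃ Γ1 Γ2 s1 s2, Multi P Γ1 a s1 ∧ Multi Q Γ2 (Γ1 k) s2 ∧
      Γ = del k Γ1 + Γ2 ∧ s = s1 + s2 := by
  constructor
  · intro H
    induction H with
    | nil => exact ⟨0, 0, 0, 0, .nil, .nil, by simp [del_zero], rfl⟩
    | cons hx _ ih =>
      obtain ⟨Γ1, Γ2, s1, s2, h1, h2, rfl, rfl⟩ := (h _ _ _).1 hx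
      obtain ⟨Δ1, Δ2, t1, t2, h3, h4, rfl, rfl⟩ := ih
      exact ⟨_, _, _, _, .cons h1 h3, h2.add h4, by rw [del_add]; abel, by omega⟩
  · rintro ⟨Γ1, Γ2, s1, s2, h1, h2, rfl, rfl⟩
    induction h1 generalizing Γ2 s2 with
    | nil =>
      obtain ⟨rfl, rfl⟩ := h2.nil_inv
      simpa [del_zero] using Multi.nil
    | cons hx _ ih =>
      obtain ⟨Γ3, Γ4, s3, s4, h3, h4, rfl, rfl⟩ := Multi.add_inv h2
      have := Multi.cons ((h _ _ _).2 ⟨_, _, _, _, hx, h3, rfl, rfl⟩) (ih _ _ h4)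
      convert this using 1
      · rw [del_add]; abel
      · omega

theorem I_subst (M : Lam) : ∀ (k : ℕ) (N : Lam) (Γ : Ctx) (x s : ℕ),
    I (M.subst k N) Γ x s ↔ Sub (I M) (I N) k Γ x s := by
  induction M with
  | var n =>
    intro k N Γ x s
    simp only [Lam.subst, Sub, I]
    split_ifs with h h'
    · subst h
      constructor
      · intro H
        exact ⟨_, Γ, 0, s, ⟨rfl, rfl⟩, by simpa [Multi.single] using H,
          by simp [del_single_eq], by simp⟩
      · rintro ⟨_, Γ2, _, s2, ⟨rfl, rfl⟩, h2, rfl, rfl⟩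
        rw [Pi.single_eq_same, Multi.single] at h2
        simpa [del_single_eq] using h2
    · constructor
      · rintro ⟨rfl, rfl⟩
        refine ⟨_, 0, 0, 0, ⟨rfl, rfl⟩, ?_, by simp [del_single_gt h'], rfl⟩
        rw [Pi.single_eq_of_ne (by omega)]; exact .nil
      · rintro ⟨_, Γ2, _, s2, ⟨rfl, rfl⟩, h2, rfl, rfl⟩
        rw [Pi.single_eq_of_ne (by omega)] at h2
        obtain ⟨rfl, rfl⟩ := h2.nil_inv
        exact ⟨by simp [del_single_gt h'], rfl⟩
    · have h' : n < k := by omega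
      constructor
      · rintro ⟨rfl, rfl⟩
        refine ⟨_, 0, 0, 0, ⟨rfl, rfl⟩, ?_, by simp [del_single_lt h'], rfl⟩
        rw [Pi.single_eq_of_ne (by omega)]; exact .nil
      · rintro ⟨_, Γ2, _, s2, ⟨rfl, rfl⟩, h2, rfl, rfl⟩
        rw [Pi.single_eq_of_ne (by omega)] at h2
        obtain ⟨rfl, rfl⟩ := h2.nil_inv
        exact ⟨by simp [del_single_lt h'], rfl⟩
  | app M M' ihM ihN =>
    intro k N Γ x s
    simp only [Lam.subst, I, Sub]
    constructor
    · rintro ⟨Γ1, Γ2, a, s1, s2, h1, h2, rfl, rfl⟩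
      obtain ⟨Δ1, Δ2, t1, t2, g1, g1', rfl, rfl⟩ := (ihM _ _ _ _ _).1 h1
      obtain ⟨Δ3, Δ4, t3, t4, g2, g2', rfl, rfl⟩ := (Multi.sub (ihN k N)).1 h2
      exact ⟨_, _, _, _, ⟨_, _, _, _, _, g1, g2, rfl, rfl⟩, g1'.add g2',
        by rw [del_add]; abel, by omega⟩
    · rintro ⟨_, Γ', _, s', ⟨Γ1, Γ2, a, s1, s2, h1, h2, rfl, rfl⟩, h3, rfl, rfl⟩
      obtain ⟨Γ3, Γ4, s3, s4, g3, h4, rfl, rfl⟩ := Multi.add_inv h3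
      exact ⟨_, _, _, _, _, (ihM _ _ _ _ _).2 ⟨_, _, _, _, h1, g3, rfl, rfl⟩,
        (Multi.sub (ihN k N)).2 ⟨_, _, _, _, h2, h4, rfl, rfl⟩, by rw [del_add]; abel, by omega⟩
  | abs M ih =>
    intro k N Γ x s
    simp only [Lam.subst, I, Sub]
    constructor
    · rintro ⟨Γ', y, s1, h1, rfl, rfl, rfl⟩
      obtain ⟨Γ1, Γ2, s1, s2, g1, h2, rfl, rfl⟩ := (ih _ _ _ _ _).1 h1
      obtain ⟨Δ2, rfl, g2⟩ := (Multi.ins (I_lift N 0)).1 h2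
      exact ⟨_, Δ2, _, s2, ⟨_, _, _, g1, by simp [delS_zero, ins_self], rfl, rfl⟩,
        by simpa [del0_apply] using g2, by rw [del_add, del_ins, del_del], by omega⟩
    · rintro ⟨_, Γ2, _, s2, ⟨Γ1, y, s1, h1, rfl, rfl, rfl⟩, h2, rfl, rfl⟩
      exact ⟨_, _, _, (ih _ _ _ _ _).2 ⟨_, ins 0 Γ2, _, s2, h1,
          (Multi.ins (I_lift N 0)).2 ⟨_, rfl, by simpa [del0_apply] using h2⟩, rfl, rfl⟩,
        by simp [delS_zero, ins_self], by rw [del_add, del_ins, del_del], by omega⟩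

theorem I_beta (M N : Lam) (Γ : Ctx) (x s : ℕ) :
    I (.app (.abs M) N) Γ x s ↔ ∃ t, s = t + 2 ∧ I (M.subst 0 N) Γ x t := by
  constructor
  · rintro ⟨_, Γ2, a, _, s2, ⟨Γ1, y, s1, h1, h, rfl, rfl⟩, h2, rfl, rfl⟩
    obtain ⟨rfl, rfl⟩ := arr_inj.1 h
    exact ⟨s1 + s2, by omega, (I_subst _ _ _ _ _ _).2 ⟨_, _, _, _, h1, h2, rfl, rfl⟩⟩
  · rintro ⟨t, rfl, h⟩
    obtain ⟨Γ1, Γ2, s1, s2, h1, h2, rfl, rfl⟩ := (I_subst _ _ _ _ _ _).1 h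
    exact ⟨_, _, _, _, _, ⟨_, _, _, h1, rfl, rfl, rfl⟩, h2, rfl, by omega⟩

theorem Multi_var0 {Γ : Ctx} {a : Multiset ℕ} {s : ℕ} :
    Multi (I (.var 0)) Γ a s ↔ Γ = Pi.single 0 a ∧ s = 0 := by
  constructor
  · intro h
    induction h with
    | nil => simp
    | cons hx _ ih =>
      obtain ⟨rfl, rfl⟩ := hx
      obtain ⟨rfl, rfl⟩ := ih
      exact ⟨by rw [← Pi.single_add]; rfl, rfl⟩
  · rintro ⟨rfl, rfl⟩
    induction a using Multiset.induction_on with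
    | empty => simpa using Multi.nil
    | cons x a ih =>
      have := Multi.cons (P := I (.var 0)) (x := x) ⟨rfl, rfl⟩ ih
      rw [← Pi.single_add] at this
      exact this

theorem I_eta (M : Lam) (Γ : Ctx) (x s : ℕ) :
    I (.abs (.app (M.lift 0) (.var 0))) Γ x s ↔ ∃ t, s = t + 2 ∧ I M Γ x t := by
  constructor
  · rintro ⟨_, y, _, ⟨Γ1, Γ2, a, s1, s2, h1, h2, rfl, rfl⟩, rfl, rfl, rfl⟩
    obtain ⟨Δ, rfl, g1⟩ := (I_lift _ _ _ _ _).1 h1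
    obtain ⟨rfl, rfl⟩ := Multi_var0.1 h2
    refine ⟨s1, by omega, ?_⟩
    have e : del 0 (Pi.single 0 a : Ctx) = 0 := by funext m; simp [del]
    simpa [del_add, del_ins, ins_self, e] using g1
  · rintro ⟨t, rfl, h⟩
    obtain ⟨a, y, rfl⟩ := arr_surj x
    have e : del 0 (Pi.single 0 a : Ctx) = 0 := by funext m; simp [del]
    exact ⟨_, _, _, ⟨_, _, _, _, _, (I_lift _ _ _ _ _).2 ⟨_, rfl, h⟩, Multi_var0.2 ⟨rfl, rfl⟩,
      rfl, rfl⟩, by simp [ins_self], by simp [del_add, del_ins, e], by omega⟩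

/-- Same type judgements, sizes not increasing. -/
def Le (M N : Lam) : Prop := ∀ Γ x s, I M Γ x s → ∃ t, t ≤ s ∧ I N Γ x t

/-- Same type judgements, sizes strictly decreasing. -/
def Lt (M N : Lam) : Prop := ∀ Γ x s, I M Γ x s → ∃ t, t < s ∧ I N Γ x t

/-- Typing inclusion, forgetting sizes. -/
def Inc (M N : Lam) : Prop := ∀ Γ x s, I M Γ x s → ∃ t, I N Γ x t

theorem Multi.inc {P Q : Ctx → ℕ → ℕ → Prop} (h : ∀ Γ x s, P Γ x s → ∃ t, Q Γ x t) {Γ a s}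
    (H : Multi P Γ a s) : ∃ t, Multi Q Γ a t := by
  induction H with
  | nil => exact ⟨_, .nil⟩
  | cons hx _ ih =>
    obtain ⟨t, ht⟩ := ih
    obtain ⟨u, hu⟩ := h _ _ _ hx
    exact ⟨_, .cons hu ht⟩

theorem Multi.le {P Q : Ctx → ℕ → ℕ → Prop} (h : ∀ Γ x s, P Γ x s → ∃ t, t ≤ s ∧ Q Γ x t) {Γ a s}
    (H : Multi P Γ a s) : ∃ t, t ≤ s ∧ Multi Q Γ a t := by
  induction H with
  | nil => exact ⟨_, le_rfl, .nil⟩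
  | cons hx _ ih =>
    obtain ⟨t, ht', ht⟩ := ih
    obtain ⟨u, hu', hu⟩ := h _ _ _ hx
    exact ⟨_, add_le_add hu' ht', .cons hu ht⟩

theorem Inc.trans {M N P : Lam} (h : Inc M N) (h' : Inc N P) : Inc M P := by
  intro Γ x s H
  obtain ⟨t, H⟩ := h _ _ _ H
  exact h' _ _ _ H

theorem Inc.app {M M' N N' : Lam} (h : Inc M M') (h' : Inc N N') :
    Inc (.app M N) (.app M' N') := by
  rintro Γ x s ⟨Γ1, Γ2, a, s1, s2, h1, h2, rfl, rfl⟩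
  obtain ⟨t, h1⟩ := h _ _ _ h1
  obtain ⟨u, h2⟩ := Multi.inc h' h2
  exact ⟨_, _, _, _, _, _, h1, h2, rfl, rfl⟩

theorem Inc.abs {M M' : Lam} (h : Inc M M') : Inc (.abs M) (.abs M') := by
  rintro Γ x s ⟨Γ1, y, s1, h1, rfl, rfl, rfl⟩
  obtain ⟨t, h1⟩ := h _ _ _ h1
  exact ⟨_, _, _, _, h1, rfl, rfl, rfl⟩

theorem BetaEtaEq.inc {M N : Lam} (h : BetaEtaEq M N) : Inc M N ∧ Inc N M := by
  induction h with
  | beta M N =>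
    constructor
    · intro Γ x s H
      obtain ⟨t, _, H⟩ := (I_beta _ _ _ _ _).1 H
      exact ⟨t, H⟩
    · intro Γ x s H
      exact ⟨_, (I_beta _ _ _ _ _).2 ⟨_, rfl, H⟩⟩
  | eta M =>
    constructor
    · intro Γ x s H
      obtain ⟨t, _, H⟩ := (I_eta _ _ _ _).1 H
      exact ⟨t, H⟩
    · intro Γ x s H
      exact ⟨_, (I_eta _ _ _ _).2 ⟨_, rfl, H⟩⟩
  | refl M => exact ⟨fun _ _ _ h => ⟨_, h⟩, fun _ _ _ h => ⟨_, h⟩⟩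
  | symm _ ih => exact ⟨ih.2, ih.1⟩
  | trans _ _ ih ih' => exact ⟨ih.1.trans ih'.1, ih'.2.trans ih.2⟩
  | appCongr _ _ ih ih' => exact ⟨ih.1.app ih'.1, ih.2.app ih'.2⟩
  | absCongr _ ih => exact ⟨ih.1.abs, ih.2.abs⟩

theorem BetaEq.toEta {M N : Lam} (h : BetaEq M N) : BetaEtaEq M N := by
  induction h with
  | beta M N => exact .beta M N
  | refl M => exact .refl M
  | symm _ ih => exact .symm ih
  | trans _ _ ih ih' => exact .trans ih ih'
  | appCongr _ _ ih ih' => exact .appCongr ih ih'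
  | absCongr _ ih => exact .absCongr ih

/-- Reduction: β-equal, with sizes not increasing. -/
structure Red (M N : Lam) : Prop where
  eq : BetaEq M N
  le : Le M N

theorem Red.refl (M : Lam) : Red M M := ⟨.refl M, fun _ _ s h => ⟨s, le_rfl, h⟩⟩

theorem Red.trans {M N P : Lam} (h : Red M N) (h' : Red N P) : Red M P := by
  refine ⟨h.eq.trans h'.eq, fun Γ x s H => ?_⟩
  obtain ⟨t, ht, H⟩ := h.le _ _ _ H
  obtain ⟨u, hu, H⟩ := h'.le _ _ _ H
  exact ⟨u, hu.trans ht, H⟩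

theorem Red.app {M M' N N' : Lam} (h : Red M M') (h' : Red N N') :
    Red (.app M N) (.app M' N') := by
  refine ⟨.appCongr h.eq h'.eq, ?_⟩
  rintro Γ x s ⟨Γ1, Γ2, a, s1, s2, h1, h2, rfl, rfl⟩
  obtain ⟨t, ht, h1⟩ := h.le _ _ _ h1
  obtain ⟨u, hu, h2⟩ := Multi.le h'.le h2
  exact ⟨_, by omega, _, _, _, _, _, h1, h2, rfl, rfl⟩

theorem Red.appl {M M' N : Lam} (h : Red M M') : Red (.app M N) (.app M' N) := h.app (.refl N)

theorem Red.appr {M N N' : Lam} (h : Red N N') : Red (.app M N) (.app M N') := (Red.refl M).app h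

theorem Red.beta {M N P : Lam} (h : M.subst 0 N = P) : Red (.app (.abs M) N) P := by
  subst h
  refine ⟨.beta M N, fun Γ x s H => ?_⟩
  obtain ⟨t, rfl, H'⟩ := (I_beta _ _ _ _ _).1 H
  exact ⟨t, by omega, H'⟩

theorem Lt.beta {M N P : Lam} (h : M.subst 0 N = P) : Lt (.app (.abs M) N) P := by
  subst h
  intro Γ x s H
  obtain ⟨t, rfl, H'⟩ := (I_beta _ _ _ _ _).1 H
  exact ⟨t, by omega, H'⟩

theorem Lt.appl {M M' N : Lam} (h : Lt M M') : Lt (.app M N) (.app M' N) := by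
  rintro Γ x s ⟨Γ1, Γ2, a, s1, s2, h1, h2, rfl, rfl⟩
  obtain ⟨t, ht, h1⟩ := h _ _ _ h1
  exact ⟨_, by omega, _, _, _, _, _, h1, h2, rfl, rfl⟩

theorem Lt.trans_red {M N P : Lam} (h : Lt M N) (h' : Red N P) : Lt M P := by
  intro Γ x s H
  obtain ⟨t, ht, H⟩ := h _ _ _ H
  obtain ⟨u, hu, H⟩ := h'.le _ _ _ H
  exact ⟨u, by omega, H⟩

theorem no_chain (c : ℕ → Lam) (h : ∀ n, Lt (c n) (c (n + 1))) (n : ℕ) (Γ : Ctx) (x s : ℕ) :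
    ¬ I (c n) Γ x s := by
  induction s using Nat.strong_induction_on generalizing n with
  | _ s ih =>
    intro H
    obtain ⟨t, ht, H⟩ := h _ _ _ _ H
    exact ih t ht _ H

theorem I_id : I (.abs (.var 0)) 0 (arr {0} 0) 1 :=
  ⟨_, 0, 0, ⟨rfl, rfl⟩, by simp, by rw [del_single_eq], rfl⟩

/-! ### λ-definability of primitive recursive functions -/

notation:70 a:70 "⬝" b:71 => Lam.app a b

/-- Closed terms. -/
structure Cl (t : Lam) : Prop where
  lift : ∀ k, t.lift k = t
  subst : ∀ k N, t.subst k N = t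

theorem Cl.app {M N : Lam} (h : Cl M) (h' : Cl N) : Cl (M ⬝ N) :=
  ⟨fun k => by simp [Lam.lift, h.lift, h'.lift], fun k N => by simp [Lam.subst, h.subst, h'.subst]⟩

def idT : Lam := .abs (.var 0)

theorem cl_idT : Cl idT := by constructor <;> intros <;> simp [idT, Lam.lift, Lam.subst]

def num : ℕ → Lam
  | 0 => .abs (.abs (.var 1))
  | n + 1 => .abs (.abs (.var 0 ⬝ num n ⬝ (num n ⬝ .var 1 ⬝ .var 0)))

theorem cl_num (n : ℕ) : Cl (num n) := by
  induction n with
  | zero => constructor <;> intros <;> simp [num, Lam.lift, Lam.subst]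
  | succ n ih => constructor <;> intros <;> simp [num, Lam.lift, Lam.subst, ih.lift, ih.subst]

def sucT : Lam :=
  .abs (.abs (.abs (.var 0 ⬝ .var 2 ⬝ (.var 2 ⬝ .var 1 ⬝ .var 0))))

theorem cl_sucT : Cl sucT := by constructor <;> intros <;> simp [sucT, Lam.lift, Lam.subst]

theorem red_suc (n : ℕ) : Red (sucT ⬝ num n) (num (n + 1)) :=
  Red.beta (by simp [num, Lam.subst, (cl_num n).lift])

theorem red_num_zero {A S : Lam} (hA : Cl A) : Red (num 0 ⬝ A ⬝ S) A :=
  (Red.appl (Red.beta (P := .abs A) (by simp [Lam.subst, hA.lift]))).trans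
    (Red.beta (hA.subst _ _))

theorem red_num_succ {A S : Lam} (hA : Cl A) (n : ℕ) :
    Red (num (n + 1) ⬝ A ⬝ S) (S ⬝ num n ⬝ (num n ⬝ A ⬝ S)) :=
  (Red.appl (Red.beta (P := .abs (.var 0 ⬝ num n ⬝ (num n ⬝ A ⬝ .var 0)))
    (by simp [Lam.subst, hA.lift, (cl_num n).subst]))).trans
    (Red.beta (by simp [Lam.subst, hA.subst, (cl_num n).subst]))

def consT (h t : Lam) : Lam := .abs (.var 0 ⬝ h ⬝ t)

theorem cl_consT {h t : Lam} (hh : Cl h) (ht : Cl t) : Cl (consT h t) := by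
  constructor <;> intros <;>
    simp [consT, Lam.lift, Lam.subst, hh.lift, hh.subst, ht.lift, ht.subst]

def pairT : Lam := .abs (.abs (.abs (.var 0 ⬝ .var 2 ⬝ .var 1)))

theorem cl_pairT : Cl pairT := by constructor <;> intros <;> simp [pairT, Lam.lift, Lam.subst]

theorem red_pairT {h t : Lam} (hh : Cl h) (ht : Cl t) : Red (pairT ⬝ h ⬝ t) (consT h t) :=
  (Red.appl (Red.beta (P := .abs (.abs (.var 0 ⬝ h ⬝ .var 1)))
    (by simp [Lam.subst, hh.lift]))).trans
    (Red.beta (by simp [consT, Lam.subst, hh.subst, ht.lift]))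

def hdT : Lam := .abs (.var 0 ⬝ .abs (.abs (.var 1)))

def tlT : Lam := .abs (.var 0 ⬝ .abs (.abs (.var 0)))

theorem cl_hdT : Cl hdT := by constructor <;> intros <;> simp [hdT, Lam.lift, Lam.subst]

theorem cl_tlT : Cl tlT := by constructor <;> intros <;> simp [tlT, Lam.lift, Lam.subst]

theorem red_hdT {h t : Lam} (hh : Cl h) (ht : Cl t) : Red (hdT ⬝ consT h t) h := by
  refine (Red.beta (P := consT h t ⬝ .abs (.abs (.var 1))) (by simp [Lam.subst])).trans ?_
  refine (Red.beta (P := .abs (.abs (.var 1)) ⬝ h ⬝ t)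
    (by simp [Lam.subst, hh.subst, ht.subst])).trans ?_
  exact (Red.appl (Red.beta (P := .abs h) (by simp [Lam.subst, hh.lift]))).trans
    (Red.beta (hh.subst _ _))

theorem red_tlT {h t : Lam} (hh : Cl h) (ht : Cl t) : Red (tlT ⬝ consT h t) t := by
  refine (Red.beta (P := consT h t ⬝ .abs (.abs (.var 0))) (by simp [Lam.subst])).trans ?_
  refine (Red.beta (P := .abs (.abs (.var 0)) ⬝ h ⬝ t)
    (by simp [Lam.subst, hh.subst, ht.subst])).trans ?_
  exact (Red.appl (Red.beta (P := .abs (.var 0)) (by simp [Lam.subst]))).trans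
    (Red.beta (by simp [Lam.subst]))

def tup : List ℕ → Lam
  | [] => idT
  | n :: l => consT (num n) (tup l)

theorem cl_tup (l : List ℕ) : Cl (tup l) := by
  induction l with
  | nil => exact cl_idT
  | cons n l ih => exact cl_consT (cl_num n) ih

/-- λ-definability of a function of vectors. -/
def Def {n : ℕ} (f : List.Vector ℕ n → ℕ) : Prop :=
  ∃ T, Cl T ∧ ∀ v, Red (T ⬝ tup v.toList) (num (f v))

def bldT : List Lam → Lam
  | [] => .abs idT
  | G :: Gs => .abs (pairT ⬝ (G ⬝ .var 0) ⬝ (bldT Gs ⬝ .var 0))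

theorem cl_bldT (Gs : List Lam) (h : ∀ G ∈ Gs, Cl G) : Cl (bldT Gs) := by
  induction Gs with
  | nil => constructor <;> intros <;> simp [bldT, Lam.lift, Lam.subst, cl_idT.lift, cl_idT.subst]
  | cons G Gs ih =>
    have h1 := h G (by simp)
    have h2 := ih (fun G hG => h G (by simp [hG]))
    constructor <;> intros <;>
      simp [bldT, Lam.lift, Lam.subst, h1.lift, h1.subst, h2.lift, h2.subst, cl_pairT.lift,
        cl_pairT.subst]

theorem red_bldT {L : Lam} (n : ℕ) (G : Fin n → Lam) (g : Fin n → ℕ) (hG : ∀ i, Cl (G i))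
    (h : ∀ i, Red (G i ⬝ L) (num (g i))) :
    Red (bldT (List.ofFn G) ⬝ L) (tup (List.ofFn g)) := by
  induction n with
  | zero => simpa [bldT, tup] using Red.beta (cl_idT.subst _ _)
  | succ n ih =>
    have ih := ih (fun i => G i.succ) (fun i => g i.succ) (fun i => hG _) (fun i => h _)
    rw [List.ofFn_succ, List.ofFn_succ]
    have h2 : Cl (bldT (List.ofFn fun i : Fin n => G i.succ)) := cl_bldT _ (by
      intro T hT
      obtain ⟨i, rfl⟩ := (List.mem_ofFn' _ _).1 hT
      exact hG _)
    refine (Red.beta (P := pairT ⬝ (G 0 ⬝ L) ⬝ (bldT (List.ofFn fun i : Fin n => G i.succ) ⬝ L))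
      (by simp [Lam.subst, (hG 0).subst, h2.subst, cl_pairT.subst])).trans ?_
    exact (((Red.refl pairT).app (h 0)).app ih).trans (red_pairT (cl_num _) (cl_tup _))

theorem def_get {n : ℕ} (i : Fin n) : Def fun v : List.Vector ℕ n => v.get i := by
  induction n with
  | zero => exact i.elim0
  | succ n ih =>
    refine Fin.cases ?_ (fun i => ?_) i
    · refine ⟨hdT, cl_hdT, fun v => ?_⟩
      obtain ⟨x, v, rfl⟩ := v.exists_eq_cons
      simpa [tup] using red_hdT (cl_num _) (cl_tup _)
    · obtain ⟨T, hT, h⟩ := ih i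
      refine ⟨.abs (T ⬝ (tlT ⬝ .var 0)), ?_, fun v => ?_⟩
      · constructor <;> intros <;>
          simp [Lam.lift, Lam.subst, hT.lift, hT.subst, cl_tlT.lift, cl_tlT.subst]
      · obtain ⟨x, v, rfl⟩ := v.exists_eq_cons
        refine (Red.beta (P := T ⬝ (tlT ⬝ tup (x ::ᵥ v).toList))
          (by simp [Lam.subst, hT.subst, cl_tlT.subst])).trans ?_
        have := (red_tlT (cl_num x) (cl_tup v.toList)).appr (M := T)
        simpa [tup] using this.trans (h v)

theorem def_primrec {n : ℕ} {f : List.Vector ℕ n → ℕ} (hf : Nat.Primrec' f) : Def f := by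
  induction hf with
  | zero =>
    refine ⟨.abs (num 0), ?_, fun v => Red.beta ((cl_num 0).subst _ _)⟩
    constructor <;> intros <;> simp [Lam.lift, Lam.subst, (cl_num 0).lift, (cl_num 0).subst]
  | succ =>
    refine ⟨.abs (sucT ⬝ (hdT ⬝ .var 0)), ?_, fun v => ?_⟩
    · constructor <;> intros <;> simp [Lam.lift, Lam.subst, cl_sucT.lift, cl_sucT.subst,
        cl_hdT.lift, cl_hdT.subst]
    · obtain ⟨x, v, rfl⟩ := v.exists_eq_cons
      refine (Red.beta (P := sucT ⬝ (hdT ⬝ tup (x ::ᵥ v).toList))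
          (by simp [Lam.subst, cl_sucT.subst, cl_hdT.subst])).trans ?_
      have := (red_hdT (cl_num x) (cl_tup v.toList)).appr (M := sucT)
      simpa [tup] using this.trans (red_suc x)
  | get i => exact def_get i
  | @comp m n f g _ _ ihf ihg =>
    obtain ⟨F, hF, hf⟩ := ihf
    choose G hG hg using ihg
    have hB : Cl (bldT (List.ofFn G)) := cl_bldT _ (by
      intro T hT
      obtain ⟨i, rfl⟩ := (List.mem_ofFn' _ _).1 hT
      exact hG _)
    refine ⟨.abs (F ⬝ (bldT (List.ofFn G) ⬝ .var 0)), ?_, fun v => ?_⟩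
    · constructor <;> intros <;> simp [Lam.lift, Lam.subst, hF.lift, hF.subst,
        hB.lift, hB.subst]
    · refine (Red.beta (P := F ⬝ (bldT (List.ofFn G) ⬝ tup v.toList))
          (by simp [Lam.subst, hF.subst, hB.subst])).trans ?_
      refine (Red.appr (red_bldT n G (fun i => g i v) hG (fun i => hg i v))).trans ?_
      have := hf (List.Vector.ofFn fun i => g i v)
      rwa [List.Vector.toList_ofFn] at this
  | @prec n f g _ _ ihf ihg =>
    obtain ⟨F, hF, hf⟩ := ihf
    obtain ⟨G, hG, hg⟩ := ihg
    refine ⟨.abs (hdT ⬝ .var 0 ⬝ (F ⬝ (tlT ⬝ .var 0)) ⬝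
      .abs (.abs (G ⬝ (pairT ⬝ .var 1 ⬝ (pairT ⬝ .var 0 ⬝ (tlT ⬝ .var 2)))))), ?_, fun v => ?_⟩
    · constructor <;> intros <;> simp [Lam.lift, Lam.subst, hF.lift, hF.subst,
        hG.lift, hG.subst, cl_hdT.lift, cl_hdT.subst, cl_tlT.lift, cl_tlT.subst,
        cl_pairT.lift, cl_pairT.subst]
    · obtain ⟨x, v, rfl⟩ := v.exists_eq_cons
      have hL := cl_tup (x ::ᵥ v).toList
      have htl : Red (tlT ⬝ tup (x ::ᵥ v).toList) (tup v.toList) := by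
        simpa [tup] using red_tlT (cl_num x) (cl_tup v.toList)
      have hhd : Red (hdT ⬝ tup (x ::ᵥ v).toList) (num x) := by
        simpa [tup] using red_hdT (cl_num x) (cl_tup v.toList)
      generalize tup (x ::ᵥ v).toList = L at hL htl hhd
      let S : Lam := .abs (.abs (G ⬝ (pairT ⬝ .var 1 ⬝ (pairT ⬝ .var 0 ⬝ (tlT ⬝ L)))))
      have hA : Cl (F ⬝ (tlT ⬝ L)) := hF.app (cl_tlT.app hL)
      refine (Red.beta (P := hdT ⬝ L ⬝ (F ⬝ (tlT ⬝ L)) ⬝ S)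
          (by simp [S, Lam.subst, hF.subst, hG.subst, cl_hdT.subst, cl_tlT.subst,
            cl_pairT.subst, hL.lift])).trans ?_
      refine ((hhd.appl).appl).trans ?_
      simp only [List.Vector.head_cons, List.Vector.tail_cons]
      clear hhd
      induction x with
      | zero =>
        exact (red_num_zero hA).trans ((Red.appr htl).trans (hf v))
      | succ x ih =>
        refine (red_num_succ hA x).trans ?_
        refine (Red.appr ih).trans ?_
        change Red _ (num (g (x ::ᵥ (Nat.rec (f v) (fun y IH => g (y ::ᵥ IH ::ᵥ v)) x : ℕ) ::ᵥ v)))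
        generalize (Nat.rec (f v) (fun y IH => g (y ::ᵥ IH ::ᵥ v)) x : ℕ) = r
        refine (Red.appl (Red.beta
          (P := .abs (G ⬝ (pairT ⬝ num x ⬝ (pairT ⬝ .var 0 ⬝ (tlT ⬝ L)))))
          (by simp [Lam.subst, hG.subst, cl_tlT.subst,
            cl_pairT.subst, hL.subst, (cl_num x).lift]))).trans ?_
        refine (Red.beta
          (P := (G ⬝ (pairT ⬝ num x ⬝ (pairT ⬝ num r ⬝ (tlT ⬝ L)))))
          (by simp [Lam.subst, hG.subst, cl_tlT.subst,
            cl_pairT.subst, hL.subst, (cl_num x).subst])).trans ?_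
        have h1 : Red (pairT ⬝ num r ⬝ (tlT ⬝ L)) (tup (r ::ᵥ v).toList) := by
          simpa [tup] using (Red.appr htl).trans (red_pairT (cl_num r) (cl_tup v.toList))
        have h2 : Red (pairT ⬝ num x ⬝ (pairT ⬝ num r ⬝ (tlT ⬝ L)))
            (tup (x ::ᵥ r ::ᵥ v).toList) := by
          simpa [tup] using (Red.appr h1).trans (red_pairT (cl_num x) (cl_tup (r ::ᵥ v).toList))
        exact (Red.appr h2).trans (hg _)

/-! ### The search loop -/

/-- `λ w n s. T ⟨n, s⟩ I (λ _ _. w w n (suc s))`. -/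
def loopT (T : Lam) : Lam :=
  .abs (.abs (.abs (T ⬝ (pairT ⬝ .var 1 ⬝ (pairT ⬝ .var 0 ⬝ idT)) ⬝ idT ⬝
    .abs (.abs (.var 4 ⬝ .var 4 ⬝ .var 3 ⬝ (sucT ⬝ .var 2))))))

theorem cl_loopT {T : Lam} (hT : Cl T) : Cl (loopT T) := by
  constructor <;> intros <;> simp [loopT, Lam.lift, Lam.subst, hT.lift, hT.subst,
    cl_pairT.lift, cl_pairT.subst, cl_idT.lift, cl_idT.subst, cl_sucT.lift, cl_sucT.subst]

def contT (T : Lam) (n s : ℕ) : Lam :=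
  .abs (.abs (loopT T ⬝ loopT T ⬝ num n ⬝ (sucT ⬝ num s)))

def testT (T : Lam) (n s : ℕ) : Lam :=
  T ⬝ (pairT ⬝ num n ⬝ (pairT ⬝ num s ⬝ idT)) ⬝ idT ⬝ contT T n s

theorem loop_step {T : Lam} (hT : Cl T) (n s : ℕ) :
    Red (loopT T ⬝ loopT T ⬝ num n ⬝ num s) (testT T n s) ∧
    Lt (loopT T ⬝ loopT T ⬝ num n ⬝ num s) (testT T n s) := by
  have hl := cl_loopT hT
  have e1 : Lam.subst (.abs (.abs (T ⬝ (pairT ⬝ .var 1 ⬝ (pairT ⬝ .var 0 ⬝ idT)) ⬝ idT ⬝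
      .abs (.abs (.var 4 ⬝ .var 4 ⬝ .var 3 ⬝ (sucT ⬝ .var 2)))))) 0 (loopT T) =
      (.abs (.abs (T ⬝ (pairT ⬝ .var 1 ⬝ (pairT ⬝ .var 0 ⬝ idT)) ⬝ idT ⬝
      .abs (.abs (loopT T ⬝ loopT T ⬝ .var 3 ⬝ (sucT ⬝ .var 2)))))) := by
    simp [Lam.subst, hT.subst, cl_pairT.subst, cl_idT.subst, cl_sucT.subst, hl.lift]
  have e2 : Lam.subst ((.abs (T ⬝ (pairT ⬝ .var 1 ⬝ (pairT ⬝ .var 0 ⬝ idT)) ⬝ idT ⬝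
      .abs (.abs (loopT T ⬝ loopT T ⬝ .var 3 ⬝ (sucT ⬝ .var 2)))))) 0 (num n) =
      ((.abs (T ⬝ (pairT ⬝ num n ⬝ (pairT ⬝ .var 0 ⬝ idT)) ⬝ idT ⬝
      .abs (.abs (loopT T ⬝ loopT T ⬝ num n ⬝ (sucT ⬝ .var 2)))))) := by
    simp [Lam.subst, hT.subst, cl_pairT.subst, cl_idT.subst, cl_sucT.subst, hl.subst,
      (cl_num n).lift]
  have e3 : Lam.subst ((T ⬝ (pairT ⬝ num n ⬝ (pairT ⬝ .var 0 ⬝ idT)) ⬝ idT ⬝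
      .abs (.abs (loopT T ⬝ loopT T ⬝ num n ⬝ (sucT ⬝ .var 2))))) 0 (num s) = testT T n s := by
    simp [testT, contT, Lam.subst, hT.subst, cl_pairT.subst, cl_idT.subst, cl_sucT.subst, hl.subst,
      (cl_num n).subst, (cl_num s).lift]
  exact ⟨((Red.beta e1).appl.appl.trans (Red.beta e2).appl).trans (Red.beta e3),
    ((Lt.beta e1).appl.appl.trans_red (Red.beta e2).appl).trans_red (Red.beta e3)⟩

theorem test_red {T : Lam} {t : List.Vector ℕ 2 → ℕ}
    (h : ∀ v, Red (T ⬝ tup v.toList) (num (t v))) (n s : ℕ) :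
    Red (testT T n s) (num (t (n ::ᵥ s ::ᵥ .nil)) ⬝ idT ⬝ contT T n s) := by
  have h1 : Red (pairT ⬝ num s ⬝ idT) (tup [s]) := red_pairT (cl_num s) cl_idT
  have h2 : Red (pairT ⬝ num n ⬝ (pairT ⬝ num s ⬝ idT)) (tup [n, s]) :=
    (Red.appr h1).trans (red_pairT (cl_num n) (cl_tup [s]))
  exact ((Red.appr h2).trans (h (n ::ᵥ s ::ᵥ .nil))).appl.appl

theorem cont_red {T : Lam} (hT : Cl T) (n s : ℕ) (A B : Lam) :
    Red (contT T n s ⬝ A ⬝ B) (loopT T ⬝ loopT T ⬝ num n ⬝ num (s + 1)) := by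
  have hl := cl_loopT hT
  have hc : Cl (loopT T ⬝ loopT T ⬝ num n ⬝ (sucT ⬝ num s)) :=
    ((hl.app hl).app (cl_num n)).app (cl_sucT.app (cl_num s))
  refine (Red.appl (Red.beta (P := .abs (loopT T ⬝ loopT T ⬝ num n ⬝ (sucT ⬝ num s))) ?_)).trans ?_
  · rw [Lam.subst, hc.subst]
  · exact (Red.beta (hc.subst _ _)).trans (Red.appr (red_suc s))

/-- For a primitive recursive test, there is a closed term `W` such that `W n` is β-equal to the
identity if some `s` passes the test, and not βη-equal to it otherwise. -/
theorem exists_search (t : List.Vector ℕ 2 → ℕ) (ht : Nat.Primrec' t) :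
    ∃ W, ∀ n, ((∃ s, t (n ::ᵥ s ::ᵥ .nil) = 0) → BetaEq (W ⬝ num n) idT) ∧
      ((¬ ∃ s, t (n ::ᵥ s ::ᵥ .nil) = 0) → ¬ BetaEtaEq (W ⬝ num n) idT) := by
  obtain ⟨T, hT, h⟩ := def_primrec ht
  have hl := cl_loopT hT
  have hW : ∀ n, BetaEq (.abs (loopT T ⬝ loopT T ⬝ .var 0 ⬝ num 0) ⬝ num n)
      (loopT T ⬝ loopT T ⬝ num n ⬝ num 0) := fun n =>
    (Red.beta (by simp [Lam.subst, hl.subst, (cl_num 0).subst])).eq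
  have hz : ∀ n s, t (n ::ᵥ s ::ᵥ .nil) = 0 →
      BetaEq (loopT T ⬝ loopT T ⬝ num n ⬝ num s) idT := by
    intro n s e
    have := ((loop_step hT n s).1.trans (test_red h n s)).eq
    rw [e] at this
    exact this.trans (red_num_zero cl_idT).eq
  have hs : ∀ n s, t (n ::ᵥ s ::ᵥ .nil) ≠ 0 →
      Red (testT T n s) (loopT T ⬝ loopT T ⬝ num n ⬝ num (s + 1)) := by
    intro n s e
    have := test_red h n s
    obtain ⟨m, hm⟩ := Nat.exists_eq_succ_of_ne_zero e
    rw [hm] at this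
    exact (this.trans (red_num_succ cl_idT m)).trans (cont_red hT n s _ _)
  refine ⟨.abs (loopT T ⬝ loopT T ⬝ .var 0 ⬝ num 0), fun n => ⟨?_, ?_⟩⟩
  · rintro ⟨s, e⟩
    refine (hW n).trans ?_
    have key : ∀ k s, t (n ::ᵥ (s + k) ::ᵥ .nil) = 0 →
        BetaEq (loopT T ⬝ loopT T ⬝ num n ⬝ num s) idT := by
      intro k
      induction k with
      | zero => exact fun s e => hz n s e
      | succ k ih =>
        intro s e
        by_cases e' : t (n ::ᵥ s ::ᵥ .nil) = 0
        · exact hz n s e'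
        · exact ((loop_step hT n s).1.trans (hs n s e')).eq.trans
            (ih (s + 1) (by rwa [Nat.add_assoc, Nat.add_comm 1 k]))
    exact key s 0 (by simpa using e)
  · intro hn hb
    have hb' : BetaEtaEq (loopT T ⬝ loopT T ⬝ num n ⬝ num 0) idT :=
      (hW n).toEta.symm.trans hb
    obtain ⟨s, hs'⟩ := hb'.inc.2 _ _ _ I_id
    exact no_chain (fun s => loopT T ⬝ loopT T ⬝ num n ⬝ num s)
      (fun s => (loop_step hT n s).2.trans_red (hs n s fun e => hn ⟨s, e⟩)) 0 _ _ _ hs'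

/-! ### Computability of the halting set -/

open Nat.Partrec in
/-- Replace the oracle by the constant zero function. -/
def back : OCode → Code
  | .zero => .zero
  | .succ => .succ
  | .left => .left
  | .right => .right
  | .oracle => .zero
  | .pair a b => .pair (back a) (back b)
  | .comp a b => .comp (back a) (back b)
  | .prec a b => .prec (back a) (back b)
  | .rfind' a => .rfind' (back a)

theorem eval_back (c : OCode) : (back c).eval = evalo (chi ∅) c := by
  induction c with
  | zero => rfl
  | succ => rfl
  | left => rfl
  | right => rfl
  | oracle => funext n; simp [back, Nat.Partrec.Code.eval, evalo, chi]; rfl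
  | pair a b iha ihb => simp only [back, Nat.Partrec.Code.eval, evalo, iha, ihb]; rfl
  | comp a b iha ihb => simp only [back, Nat.Partrec.Code.eval, evalo, iha, ihb]; rfl
  | prec a b iha ihb => simp only [back, Nat.Partrec.Code.eval, evalo, iha, ihb]; rfl
  | rfind' a iha => simp only [back, Nat.Partrec.Code.eval, evalo, iha]; rfl

def fwd : Nat.Partrec.Code → OCode
  | .zero => .zero
  | .succ => .succ
  | .left => .left
  | .right => .right
  | .pair a b => .pair (fwd a) (fwd b)
  | .comp a b => .comp (fwd a) (fwd b)
  | .prec a b => .prec (fwd a) (fwd b)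
  | .rfind' a => .rfind' (fwd a)

theorem evalo_fwd (O : ℕ →. ℕ) (c : Nat.Partrec.Code) : evalo O (fwd c) = c.eval := by
  induction c with
  | zero => rfl
  | succ => rfl
  | left => rfl
  | right => rfl
  | pair a b iha ihb => simp only [fwd, Nat.Partrec.Code.eval, evalo, iha, ihb]; rfl
  | comp a b iha ihb => simp only [fwd, Nat.Partrec.Code.eval, evalo, iha, ihb]; rfl
  | prec a b iha ihb => simp only [fwd, Nat.Partrec.Code.eval, evalo, iha, ihb]; rfl
  | rfind' a iha => simp only [fwd, Nat.Partrec.Code.eval, evalo, iha]; rfl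

theorem exists_ocode {f : ℕ → ℕ} (hf : Primrec f) (O : ℕ →. ℕ) :
    ∃ c : OCode, ∀ n, evalo O c n = Part.some (f n) := by
  obtain ⟨c, hc⟩ := Nat.Partrec.Code.exists_code.1
    (Nat.Partrec.of_primrec (Primrec.nat_iff.1 hf))
  exact ⟨fwd c, fun n => by rw [evalo_fwd, hc]; rfl⟩

theorem ofNat_surj (c : OCode) : ∃ n, OCode.ofNat n = c := by
  have key : ∀ (i q : ℕ), i < 4 → (4 * q + i) % 4 = i ∧ (4 * q + i) / 4 = q := by omega
  induction c with
  | zero => exact ⟨0, by simp [OCode.ofNat]⟩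
  | succ => exact ⟨1, by simp [OCode.ofNat]⟩
  | left => exact ⟨2, by simp [OCode.ofNat]⟩
  | right => exact ⟨3, by simp [OCode.ofNat]⟩
  | oracle => exact ⟨4, by simp [OCode.ofNat]⟩
  | pair a b iha ihb =>
    obtain ⟨m, rfl⟩ := iha
    obtain ⟨n, rfl⟩ := ihb
    refine ⟨4 * Nat.pair m n + 0 + 5, ?_⟩
    rw [OCode.ofNat]
    simp
  | comp a b iha ihb =>
    obtain ⟨m, rfl⟩ := iha
    obtain ⟨n, rfl⟩ := ihb
    refine ⟨4 * Nat.pair m n + 1 + 5, ?_⟩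
    rw [OCode.ofNat]
    simp [(key 1 (Nat.pair m n) (by omega)).1, (key 1 (Nat.pair m n) (by omega)).2]
  | prec a b iha ihb =>
    obtain ⟨m, rfl⟩ := iha
    obtain ⟨n, rfl⟩ := ihb
    refine ⟨4 * Nat.pair m n + 2 + 5, ?_⟩
    rw [OCode.ofNat]
    simp [(key 2 (Nat.pair m n) (by omega)).1, (key 2 (Nat.pair m n) (by omega)).2]
  | rfind' a iha =>
    obtain ⟨m, rfl⟩ := iha
    refine ⟨4 * Nat.pair m 0 + 3 + 5, ?_⟩
    rw [OCode.ofNat]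
    simp [(key 3 (Nat.pair m 0) (by omega)).1, (key 3 (Nat.pair m 0) (by omega)).2]

open Nat.Partrec in
def stepF (l : List Code) : Code :=
  let q := (l.length - 5) / 4
  let a := l.getD q.unpair.1 .zero
  let b := l.getD q.unpair.2 .zero
  if l.length = 0 then .zero else if l.length = 1 then .succ else if l.length = 2 then .left
  else if l.length = 3 then .right else if l.length = 4 then .zero
  else if (l.length - 5) % 4 = 0 then .pair a b
  else if (l.length - 5) % 4 = 1 then .comp a b
  else if (l.length - 5) % 4 = 2 then .prec a b
  else .rfind' a

theorem primrec_stepF : Primrec stepF := by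
  have hl : Primrec fun l : List Nat.Partrec.Code => l.length := Primrec.list_length
  have hm : Primrec fun l : List Nat.Partrec.Code => l.length - 5 :=
    Primrec.nat_sub.comp hl (Primrec.const 5)
  have hq : Primrec fun l : List Nat.Partrec.Code => (l.length - 5) / 4 :=
    Primrec.nat_div.comp hm (Primrec.const 4)
  have hr : Primrec fun l : List Nat.Partrec.Code => (l.length - 5) % 4 :=
    Primrec.nat_mod.comp hm (Primrec.const 4)
  have ha : Primrec fun l : List Nat.Partrec.Code =>
      l.getD ((l.length - 5) / 4).unpair.1 .zero :=
    (Primrec.list_getD _).comp Primrec.id (Primrec.fst.comp (Primrec.unpair.comp hq))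
  have hb : Primrec fun l : List Nat.Partrec.Code =>
      l.getD ((l.length - 5) / 4).unpair.2 .zero :=
    (Primrec.list_getD _).comp Primrec.id (Primrec.snd.comp (Primrec.unpair.comp hq))
  have eqp : ∀ {f : List Nat.Partrec.Code → ℕ} (_ : Primrec f) (k : ℕ),
      PrimrecPred fun l => f l = k := fun hf k => Primrec.eq.comp hf (Primrec.const k)
  unfold stepF
  exact Primrec.ite (eqp hl 0) (Primrec.const _) <|
    Primrec.ite (eqp hl 1) (Primrec.const _) <| Primrec.ite (eqp hl 2) (Primrec.const _) <|
    Primrec.ite (eqp hl 3) (Primrec.const _) <| Primrec.ite (eqp hl 4) (Primrec.const _) <|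
    Primrec.ite (eqp hr 0) (Nat.Partrec.Code.primrec₂_pair.comp ha hb) <|
    Primrec.ite (eqp hr 1) (Nat.Partrec.Code.primrec₂_comp.comp ha hb) <|
    Primrec.ite (eqp hr 2) (Nat.Partrec.Code.primrec₂_prec.comp ha hb) <|
    Nat.Partrec.Code.primrec_rfind'.comp ha

theorem getD_range (f : ℕ → Nat.Partrec.Code) {n i : ℕ} (h : i < n) :
    ((List.range n).map f).getD i .zero = f i := by
  simp [List.getD, h]

theorem stepF_spec (n : ℕ) :
    stepF ((List.range n).map fun e => back (OCode.ofNat e)) = back (OCode.ofNat n) := by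
  rcases n with _ | _ | _ | _ | _ | n
  · simp [stepF, OCode.ofNat, back]
  · simp [stepF, OCode.ofNat, back]
  · simp [stepF, OCode.ofNat, back]
  · simp [stepF, OCode.ofNat, back]
  · simp [stepF, OCode.ofNat, back]
  · have h1 := Nat.unpair_left_le (n / 4)
    have h2 := Nat.unpair_right_le (n / 4)
    have h3 := Nat.div_le_self n 4
    have e : n + 1 + 1 + 1 + 1 + 1 = n + 5 := rfl
    simp only [e]
    have g1 := getD_range (fun e => back (OCode.ofNat e)) (n := n + 5)
      (i := (n / 4).unpair.1) (by omega)
    have g2 := getD_range (fun e => back (OCode.ofNat e)) (n := n + 5)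
      (i := (n / 4).unpair.2) (by omega)
    rw [OCode.ofNat]
    unfold stepF
    simp only [List.length_map, List.length_range, Nat.add_sub_cancel, g1, g2]
    have h4 : n % 4 < 4 := Nat.mod_lt _ (by omega)
    generalize n % 4 = r at h4
    interval_cases r <;> simp [back]

theorem primrec_back : Primrec fun e => back (OCode.ofNat e) := by
  have := Primrec.nat_strong_rec (α := Unit) (fun _ e => back (OCode.ofNat e))
    (g := fun _ l => some (stepF l))
    (Primrec.option_some.comp (primrec_stepF.comp Primrec.snd)) (fun _ n => by
      rw [stepF_spec])
  exact this.comp (Primrec.const ()) Primrec.id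

theorem khalt_sigma : ∃ t : List.Vector ℕ 2 → ℕ, Nat.Primrec' t ∧
    ∀ n, n ∈ Khalt ↔ ∃ s, t (n ::ᵥ s ::ᵥ .nil) = 0 := by
  have hp : Partrec fun e : ℕ => (back (OCode.ofNat e)).eval e :=
    Nat.Partrec.Code.eval_part.comp primrec_back.to_comp Computable.id
  obtain ⟨c, hc⟩ := Nat.Partrec.Code.exists_code.1 (Partrec.nat_iff.1 hp)
  refine ⟨fun v => if (Nat.Partrec.Code.evaln v.tail.head c v.head).isSome = true then 0 else 1,
    ?_, fun n => ?_⟩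
  · rw [Nat.Primrec'.prim_iff]
    refine Primrec.ite ?_ (Primrec.const 0) (Primrec.const 1)
    refine Primrec.eq.comp (Primrec.option_isSome.comp ?_) (Primrec.const true)
    exact Nat.Partrec.Code.primrec_evaln.comp (Primrec.pair (Primrec.pair
      (Primrec.vector_head.comp Primrec.vector_tail) (Primrec.const c)) Primrec.vector_head)
  · have h1 : n ∈ Khalt ↔ (c.eval n).Dom := by
      rw [hc]; change _ ↔ ((back (OCode.ofNat n)).eval n).Dom; rw [eval_back]; rfl
    rw [h1, Part.dom_iff_mem]
    simp only [Nat.Partrec.Code.evaln_complete, List.Vector.head_cons, List.Vector.tail_cons]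
    constructor
    · rintro ⟨y, k, h⟩
      exact ⟨k, by rw [if_pos (by rw [h]; rfl)]⟩
    · rintro ⟨k, h⟩
      by_contra hne
      rw [if_neg (fun hy => by
        obtain ⟨y, hy⟩ := Option.isSome_iff_exists.1 hy
        exact hne ⟨y, k, hy⟩)] at h
      exact absurd h one_ne_zero

theorem evalo_comp {O : ℕ →. ℕ} {cf cg : OCode} {n m : ℕ} (h : evalo O cg n = Part.some m) :
    evalo O (.comp cf cg) n = evalo O cf m :=
  (congrArg (fun p : Part ℕ => p.bind (evalo O cf)) h).trans (Part.bind_some _ _)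

theorem evalo_pair {O : ℕ →. ℕ} {cf cg : OCode} {n a b : ℕ} (h : evalo O cf n = Part.some a)
    (h' : evalo O cg n = Part.some b) :
    evalo O (.pair cf cg) n = Part.some (Nat.pair a b) := by
  change Nat.pair <$> (evalo O cf n) <*> (evalo O cg n) = _
  rw [h, h']
  simp [Seq.seq]

theorem evalo_left {O : ℕ →. ℕ} (n : ℕ) : evalo O .left n = Part.some n.unpair.1 := rfl

theorem evalo_right {O : ℕ →. ℕ} (n : ℕ) : evalo O .right n = Part.some n.unpair.2 := rfl

theorem evalo_zero {O : ℕ →. ℕ} (n : ℕ) : evalo O .zero n = Part.some 0 := rfl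

theorem evalo_id {O : ℕ →. ℕ} (n : ℕ) : evalo O (.pair .left .right) n = Part.some n := by
  rw [evalo_pair (evalo_left n) (evalo_right n), Nat.pair_unpair]

theorem evalo_prec_zero {O : ℕ →. ℕ} {cf cg : OCode} (a : ℕ) :
    evalo O (.prec cf cg) (Nat.pair a 0) = evalo O cf a := by
  simp only [evalo, Nat.unpaired, Nat.unpair_pair]
  rfl

theorem evalo_prec_succ {O : ℕ →. ℕ} {cf cg : OCode} {a n i : ℕ}
    (h : evalo O (.prec cf cg) (Nat.pair a n) = Part.some i) :
    evalo O (.prec cf cg) (Nat.pair a (n + 1)) = evalo O cg (Nat.pair a (Nat.pair n i)) := by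
  have : evalo O (.prec cf cg) (Nat.pair a (n + 1)) =
      (evalo O (.prec cf cg) (Nat.pair a n)).bind
        fun i => evalo O cg (Nat.pair a (Nat.pair n i)) := by
    simp only [evalo, Nat.unpaired, Nat.unpair_pair]
    rfl
  rw [this, h, Part.bind_some]

theorem rfind_dom_const {O : ℕ →. ℕ} {cf : OCode} {a y : ℕ}
    (h : ∀ m, evalo O cf (Nat.pair a m) = Part.some y) :
    (evalo O (.rfind' cf) (Nat.pair a 0)).Dom ↔ y = 0 := by
  have : evalo O (.rfind' cf) (Nat.pair a 0) =
      Part.map (· + 0) (Nat.rfind (fun _ => Part.some (decide (y = 0)))) := by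
    have e : (fun n : ℕ => (fun x => decide (x = 0)) <$> evalo O cf (Nat.pair a (n + 0))) =
        fun _ => Part.some (decide (y = 0)) := by
      funext n
      rw [h]
      exact Part.map_some _ _
    rw [← e]
    simp only [evalo, Nat.unpaired, Nat.unpair_pair]
  rw [this]
  constructor
  · intro hd
    have := Nat.rfind_spec (Part.get_mem (show (Nat.rfind
      (fun _ : ℕ => Part.some (decide (y = 0)))).Dom from hd))
    simpa using this
  · intro hy
    exact Nat.rfind_dom.2 ⟨0, by simp [hy], fun {m} hm => absurd hm (Nat.not_lt_zero m)⟩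

theorem khalt_not_computable : ¬ TuringLE Khalt ∅ := by
  rintro ⟨c, hc⟩
  obtain ⟨e, he⟩ := ofNat_surj
    (.comp (.rfind' (.comp c .left)) (.pair (.pair .left .right) .zero))
  have h1 : ∀ n, (evalo (chi ∅) (.comp (.rfind' (.comp c .left))
      (.pair (.pair .left .right) .zero)) n).Dom ↔ n ∉ Khalt := by
    intro n
    have e1 : evalo (chi ∅) (.pair (.pair .left .right) .zero) n = Part.some (Nat.pair n 0) :=
      evalo_pair (evalo_id n) (evalo_zero n)
    rw [evalo_comp e1, rfind_dom_const (y := Khalt.indicator (fun _ => 1) n)]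
    · by_cases h : n ∈ Khalt <;> simp [h]
    · intro m
      rw [evalo_comp (evalo_left _), hc, Nat.unpair_pair]
      rfl
  have h2 : e ∈ Khalt ↔ e ∉ Khalt := by
    rw [← h1 e, ← he]; rfl
  tauto

theorem main_red (X : Set ℕ) (F : Lam → ℕ)
    (happ : ∀ M N, F (M ⬝ N) ∈ phi (chi X) (F M) (F N))
    (hb : ∀ M N, BetaEq M N → F M = F N)
    (hi : ∀ M N, F M = F N → BetaEtaEq M N) : TuringLE Khalt X := by
  obtain ⟨t, ht, hk⟩ := khalt_sigma
  obtain ⟨W, hW⟩ := exists_search t ht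
  have hn : ∀ n, F (num (n + 1)) ∈ phi (chi X) (F sucT) (F (num n)) := by
    intro n
    rw [← hb _ _ (red_suc n).eq]
    exact happ _ _
  have key : ∀ n, n ∈ Khalt ↔ F (W ⬝ num n) = F idT := by
    intro n
    rw [hk]
    constructor
    · intro h; exact hb _ _ ((hW n).1 h)
    · intro h; by_contra h'; exact (hW n).2 h' (hi _ _ h)
  obtain ⟨cz, hz⟩ := exists_ocode (Primrec.const (F (num 0))) (chi X)
  obtain ⟨ce, hce⟩ := exists_ocode (f := fun m => if m = F idT then 1 else 0)
    (Primrec.ite (Primrec.eq.comp Primrec.id (Primrec.const _)) (Primrec.const 1)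
      (Primrec.const 0)) (chi X)
  let c1 : OCode := .prec cz (.comp (OCode.ofNat (F sucT)) (.comp .right .right))
  have h1 : ∀ n, evalo (chi X) c1 (Nat.pair 0 n) = Part.some (F (num n)) := by
    intro n
    induction n with
    | zero => exact (evalo_prec_zero 0).trans (hz 0)
    | succ n ih =>
      rw [evalo_prec_succ ih]
      have e : evalo (chi X) (.comp .right .right)
          (Nat.pair 0 (Nat.pair n (F (num n)))) = Part.some (F (num n)) := by
        rw [evalo_comp (evalo_right _), evalo_right]
        simp
      exact (evalo_comp e).trans (Part.eq_some_iff.2 (hn n))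
  refine ⟨.comp ce (.comp (OCode.ofNat (F W)) (.comp c1 (.pair .zero (.pair .left .right)))), ?_⟩
  funext n
  have e1 : evalo (chi X) (.pair .zero (.pair .left .right)) n = Part.some (Nat.pair 0 n) :=
    evalo_pair (evalo_zero n) (evalo_id n)
  have e2 := (evalo_comp e1).trans (h1 n)
  have e3 := (evalo_comp e2).trans (Part.eq_some_iff.2 (happ W (num n)))
  refine ((evalo_comp e3).trans (hce _)).trans ?_
  unfold chi
  by_cases h : n ∈ Khalt
  · simp [h, (key n).1 h]
  · have h2 : F (W ⬝ num n) ≠ F idT := fun e => h ((key n).2 e)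
    simp [h, h2]

theorem emb_eta (X : Set ℕ) (f : LamBetaEta → ℕ)
    (hf : IsPCAEmbedding lamBetaEtaApp (k1App X) f) : TuringLE Khalt X := by
  refine main_red X (fun M => f (Quotient.mk lamBetaEtaSetoid M)) (fun M N => ?_)
    (fun M N h => ?_) (fun M N h => ?_)
  · exact hf.2 _ _ _ (Part.mem_some _)
  · exact congrArg f (Quotient.sound (s := lamBetaEtaSetoid) h.toEta)
  · exact Quotient.exact (s := lamBetaEtaSetoid) (hf.1 h)

theorem emb_beta (X : Set ℕ) (f : LamBeta → ℕ)
    (hf : IsPCAEmbedding lamBetaApp (k1App X) f) : TuringLE Khalt X := by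
  refine main_red X (fun M => f (Quotient.mk lamBetaSetoid M)) (fun M N => ?_)
    (fun M N h => ?_) (fun M N h => ?_)
  · exact hf.2 _ _ _ (Part.mem_some _)
  · exact congrArg f (Quotient.sound (s := lamBetaSetoid) h)
  · exact BetaEq.toEta (Quotient.exact (s := lamBetaSetoid) (hf.1 h))

theorem stmt5 :
    (∀ X : Set ℕ,
      ((∃ f : LamBetaEta → ℕ, IsPCAEmbedding lamBetaEtaApp (k1App X) f) ∨
       (∃ f : LamBeta → ℕ, IsPCAEmbedding lamBetaApp (k1App X) f)) →
      TuringLE Khalt X) ∧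
    (¬ ∃ f : LamBeta → ℕ, IsPCAEmbedding lamBetaApp (k1App ∅) f) ∧
    (¬ ∃ f : LamBetaEta → ℕ, IsPCAEmbedding lamBetaEtaApp (k1App ∅) f) := by
  refine ⟨?_, ?_, ?_⟩
  · rintro X (⟨f, hf⟩ | ⟨f, hf⟩)
    · exact emb_eta X f hf
    · exact emb_beta X f hf
  · rintro ⟨f, hf⟩
    exact khalt_not_computable (emb_beta ∅ f hf)
  · rintro ⟨f, hf⟩
    exact khalt_not_computable (emb_eta ∅ f hf)

end PCAEmb
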